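/- Let Ŝ be a Neumann subgroup of M̂ = PGL(2,ℤ), and let ι : ℤ → ℤ and δ : ℤ → {1,−1} be the unique functions satisfying Ŝ τ^n ω = Ŝ τ^{ι(n)} ν^{(1−δ(n))/2} for all n ∈ ℤ. Then ι is an involution of ℤ (ι(ι(n)) = n for all n) and δ(ι(n)) = δ(n) for all n ∈ ℤ. -/

import Mathlib

open Matrix Pointwise

noncomputable section

abbrev GL2Z := Matrix.GeneralLinearGroup (Fin 2) ℤ

/-- The subgroup {±I} of GL(2,ℤ), which is its center. -/
def pmI : Subgroup GL2Z := Subgroup.zpowers (-1)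

instance pmI_normal : pmI.Normal := by
  constructor
  rintro n hn g
  obtain ⟨k, hk⟩ := Subgroup.mem_zpowers_iff.mp hn
  have hc : Commute ((-1 : GL2Z) ^ k) g := (Commute.neg_one_left g).zpow_left k
  have : g * n * g⁻¹ = n := by
    rw [← hk, ← hc.eq]; group
  rw [this]; exact hn

/-- The extended modular group PGL(2,ℤ) = GL(2,ℤ)/{±I}. -/
abbrev Mhat := GL2Z ⧸ pmI

def pr : GL2Z →* Mhat := QuotientGroup.mk' pmI

def tauGL : GL2Z := ⟨!![1,1;0,1], !![1,-1;0,1], by decide, by decide⟩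
def nuGL : GL2Z := ⟨!![-1,0;0,1], !![-1,0;0,1], by decide, by decide⟩
def omegaGL : GL2Z := ⟨!![0,-1;1,0], !![0,1;-1,0], by decide, by decide⟩
def phiGL : GL2Z := ⟨!![0,-1;1,1], !![1,1;-1,0], by decide, by decide⟩

/-- τ, the class of [[1,1],[0,1]]. -/
def tau : Mhat := pr tauGL
/-- ν, the class of [[-1,0],[0,1]]. -/
def nu : Mhat := pr nuGL
/-- ω, the class of [[0,-1],[1,0]]. -/
def omega : Mhat := pr omegaGL
/-- φ, the class of [[0,-1],[1,1]]. -/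
def phi : Mhat := pr phiGL

/-- T̂ = ⟨τ, ν⟩, the stabilizer of ∞. -/
def That : Subgroup Mhat := Subgroup.closure {tau, nu}

/-- A Neumann subgroup of the extended modular group: a complement of T̂. -/
def IsNeumann (S : Subgroup Mhat) : Prop :=
  (S : Set Mhat) * (That : Set Mhat) = Set.univ ∧ S ⊓ That = ⊥

/-- The modular group PSL(2,ℤ), as the subgroup of PGL(2,ℤ) of classes of
matrices of determinant one. -/
def Msub : Subgroup Mhat :=
  Subgroup.map pr (MonoidHom.ker (Matrix.GeneralLinearGroup.det))

/-!
Right multiplication by `ω` permutes the cosets of `Ŝ`, and it is an involution because `ω² = 1`.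
Since `ν` commutes with `ω` in `PGL(2, ℤ)`, multiplying `Ŝ τⁿ` twice by `ω` gives
`Ŝ τⁿ = Ŝ τ^{ι(ι(n))} ν^{ε(ι(n)) + ε(n)}`, where `ε = (1 - δ) / 2 ∈ {0, 1}`. As `Ŝ ∩ T̂ = 1`, the
two coset representatives are equal in `T̂`, where the exponent of `τ` and the parity of that of `ν`
are unique.
-/

section AbstractGroup

variable {G : Type*} [Group G] {S : Subgroup G} {t u w : G}

theorem eq_zero_and_even_of_zpow_mul_zpow_eq_one (ht : ¬IsOfFinOrder t) (hu : u ^ 2 = 1)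
    (hut : u ∉ Subgroup.zpowers t) {m k : ℤ} (h : t ^ m * u ^ k = 1) : m = 0 ∧ Even k := by
  have hk : Even k := by
    by_contra hk
    have hu_odd : u ^ k = u := by
      rw [zpow_eq_zpow_emod' k hu, Nat.cast_ofNat,
        Int.odd_iff.mp (Int.not_even_iff_odd.mp hk), zpow_one]
    rw [hu_odd, mul_eq_one_iff_inv_eq] at h
    exact hut (h ▸ inv_mem (Subgroup.zpow_mem_zpowers t m))
  have hu_even : u ^ k = 1 := by
    rw [zpow_eq_zpow_emod' k hu, Nat.cast_ofNat, Int.even_iff.mp hk, zpow_zero]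
  rw [hu_even, mul_one] at h
  exact ⟨injective_zpow_iff_not_isOfFinOrder.mpr ht (h.trans (zpow_zero t).symm), hk⟩

theorem mul_inv_mem_of_sq_eq_one_of_commute (hw : w ^ 2 = 1) {v x y z : G} (hvw : Commute v w)
    (hxy : x * w * (y * v)⁻¹ ∈ S) (hyz : y * w * z⁻¹ ∈ S) : x * (z * v)⁻¹ ∈ S := by
  have hcomp : x * w * (y * v)⁻¹ * (y * w * z⁻¹) = x * (z * v)⁻¹ := calc
    _ = x * (w * v⁻¹) * w * z⁻¹ := by group
    _ = x * (v⁻¹ * w) * w * z⁻¹ := by rw [hvw.inv_left.eq]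
    _ = x * v⁻¹ * w ^ 2 * z⁻¹ := by simp only [sq, mul_assoc]
    _ = x * (z * v)⁻¹ := by rw [hw]; group
  exact hcomp ▸ S.mul_mem hxy hyz

theorem eq_and_even_of_zpow_mul_inv_mem (ht : ¬IsOfFinOrder t) (hu : u ^ 2 = 1)
    (hut : u ∉ Subgroup.zpowers t) (hS : Disjoint S (Subgroup.closure {t, u})) {n m k : ℤ}
    (h : t ^ n * (t ^ m * u ^ k)⁻¹ ∈ S) : m = n ∧ Even k := by
  have ht_mem : t ∈ Subgroup.closure {t, u} := Subgroup.subset_closure (by simp)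
  have hu_mem : u ∈ Subgroup.closure {t, u} := Subgroup.subset_closure (by simp)
  have hn : t ^ n = t ^ m * u ^ k := mul_inv_eq_one.mp <| Subgroup.disjoint_def.mp hS h <|
    mul_mem (zpow_mem ht_mem n) (inv_mem (mul_mem (zpow_mem ht_mem m) (zpow_mem hu_mem k)))
  have hone : t ^ (m - n) * u ^ k = 1 := by
    rw [sub_eq_neg_add, _root_.zpow_add, _root_.zpow_neg, mul_assoc, ← hn, inv_mul_cancel]
  have ⟨hmn, hk⟩ := eq_zero_and_even_of_zpow_mul_zpow_eq_one ht hu hut hone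
  exact ⟨sub_eq_zero.mp hmn, hk⟩

theorem neumann_iota_involutive_general (ht : ¬IsOfFinOrder t) (hu : u ^ 2 = 1)
    (hut : u ∉ Subgroup.zpowers t) (hw : w ^ 2 = 1) (huw : Commute u w)
    (hS : Disjoint S (Subgroup.closure {t, u}))
    {iota delta : ℤ → ℤ} (hdelta : ∀ n, delta n = 1 ∨ delta n = -1)
    (hcoset : ∀ n : ℤ, t ^ n * w * (t ^ iota n * u ^ ((1 - delta n) / 2))⁻¹ ∈ S) :
    (∀ n : ℤ, iota (iota n) = n) ∧ (∀ n : ℤ, delta (iota n) = delta n) := by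
  rw [← forall_and]
  intro n
  have hn := mul_inv_mem_of_sq_eq_one_of_commute hw (huw.zpow_left _) (hcoset n) (hcoset (iota n))
  rw [mul_assoc (t ^ _), ← _root_.zpow_add] at hn
  obtain ⟨hiota, hparity⟩ := eq_and_even_of_zpow_mul_inv_mem ht hu hut hS hn
  refine ⟨hiota, ?_⟩
  rcases hdelta n with h | h <;> rcases hdelta (iota n) with h' | h' <;> simp_all

end AbstractGroup

theorem mem_pmI_iff {g : GL2Z} : g ∈ pmI ↔ g = 1 ∨ g = -1 := by
  rw [pmI, Subgroup.mem_zpowers_iff]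
  constructor
  · rintro ⟨k, rfl⟩
    exact k.even_or_odd.imp Even.neg_one_zpow Odd.neg_one_zpow
  · rintro (rfl | rfl)
    exacts [⟨0, zpow_zero _⟩, ⟨1, zpow_one _⟩]

theorem pr_eq_pr_iff {g h : GL2Z} : pr g = pr h ↔ g = h ∨ g = -h := by
  rw [eq_comm, pr, QuotientGroup.mk'_apply, QuotientGroup.mk'_apply, QuotientGroup.eq, mem_pmI_iff,
    inv_mul_eq_iff_eq_mul, inv_mul_eq_iff_eq_mul, mul_one, mul_neg_one]

theorem tauGL_zpow (n : ℤ) : tauGL ^ n = GeneralLinearGroup.upperRightHom n := by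
  have htau : tauGL = GeneralLinearGroup.upperRightHom (1 : ℤ) := Units.ext rfl
  rw [htau, ← AddChar.map_zsmul_eq_zpow, zsmul_one, Int.cast_id]

theorem not_isOfFinOrder_tau : ¬IsOfFinOrder tau := by
  rw [isOfFinOrder_iff_zpow_eq_one]
  rintro ⟨n, hn, h⟩
  rw [tau, ← map_zpow, ← map_one pr, pr_eq_pr_iff, tauGL_zpow] at h
  rcases h with h | h <;> simpa [hn] using congr($h 0 1)

theorem nu_notMem_zpowers_tau : nu ∉ Subgroup.zpowers tau := by
  rintro ⟨n, h : tau ^ n = nu⟩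
  rw [tau, nu, ← map_zpow, pr_eq_pr_iff, tauGL_zpow] at h
  rcases h with h | h
  · simpa [nuGL] using congr($h 0 0)
  · simpa [nuGL] using congr($h 1 1)

theorem nu_sq : nu ^ 2 = 1 := by
  rw [nu, ← map_pow, ← map_one pr, pr_eq_pr_iff]
  exact .inl (Units.ext (by decide))

theorem omega_sq : omega ^ 2 = 1 := by
  rw [omega, ← map_pow, ← map_one pr, pr_eq_pr_iff]
  exact .inr (Units.ext (by decide))

theorem commute_nu_omega : Commute nu omega := by
  rw [Commute, SemiconjBy, nu, omega, ← map_mul, ← map_mul, pr_eq_pr_iff]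
  exact .inr (Units.ext (by decide))

/-- For a Neumann subgroup Ŝ of M̂ = PGL(2,ℤ), the functions
ι : ℤ → ℤ and δ : ℤ → {1,−1} determined by Ŝτⁿω = Ŝτ^{ι(n)}ν^{(1−δ(n))/2}
satisfy: ι is an involution of ℤ and δ∘ι = δ. -/
theorem neumann_iota_involutive
    (Shat : Subgroup Mhat) (hN : IsNeumann Shat)
    (iota : ℤ → ℤ) (delta : ℤ → ℤ) (hdelta : ∀ n, delta n = 1 ∨ delta n = -1)
    (hcoset : ∀ n : ℤ,
      (tau ^ n * omega) * (tau ^ iota n * nu ^ ((1 - delta n) / 2))⁻¹ ∈ Shat) :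
    (∀ n : ℤ, iota (iota n) = n) ∧ (∀ n : ℤ, delta (iota n) = delta n) :=
  neumann_iota_involutive_general not_isOfFinOrder_tau nu_sq nu_notMem_zpowers_tau omega_sq
    commute_nu_omega (disjoint_iff.mpr hN.2) hdelta hcoset
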